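/- arXiv:2102.01591 — 2 statements merged into one kernel-verified Lean document; each statement's English description precedes it below -/
import Mathlib

section
/- Alexandrov–Bakelman–Pucci estimate for lower semicontinuous viscosity supersolutions: Let v be a lower semicontinuous function on the closed ball B̄_{2δ} ⊆ ℝᵐ, bounded below on B_δ, with v ≥ 0 on B_{2δ} \ B_δ, and suppose v is a viscosity supersolution of Δv = f with f continuous. Let Γ_v be the convex envelope Γ_v(z) = sup{ l(z) : l affine, l ≤ v on B_δ, l ≤ 0 on B_{2δ} \ B_δ }. Then sup_{B_δ} max(−inf v, 0) ≤ C·δ·( ∫_{B_δ ∩ {v = Γ_v}} max(f,0)^m dV )^{1/m}, where C depends only on the dimension m. -/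
open MeasureTheory Metric Set Real Filter Topology

noncomputable section

/-- The convex envelope `Γ_v(z) = sup{ l(z) : l affine, l ≤ v on B_δ, l ≤ 0 on B_{2δ} \ B_δ }`. -/
def convEnv {m : ℕ} (δ : ℝ) (v : EuclideanSpace ℝ (Fin m) → ℝ)
    (z : EuclideanSpace ℝ (Fin m)) : ℝ :=
  sSup {y : ℝ | ∃ l : EuclideanSpace ℝ (Fin m) →ᵃ[ℝ] ℝ,
    (∀ x ∈ ball (0 : EuclideanSpace ℝ (Fin m)) δ, l x ≤ v x) ∧
    (∀ x ∈ ball (0 : EuclideanSpace ℝ (Fin m)) (2 * δ) \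
        ball (0 : EuclideanSpace ℝ (Fin m)) δ, l x ≤ 0) ∧
    y = l z}

/-- The Laplacian of a `C²` function `φ` at `x`, computed in the standard
orthonormal basis of `ℝᵐ`. -/
def lapR {m : ℕ} (φ : EuclideanSpace ℝ (Fin m) → ℝ)
    (x : EuclideanSpace ℝ (Fin m)) : ℝ :=
  ∑ j : Fin m,
    iteratedFDeriv ℝ 2 φ x
      ![EuclideanSpace.single j (1:ℝ), EuclideanSpace.single j (1:ℝ)]

/-- `v` is a (lower semicontinuous) viscosity supersolution of `Δv = f` on the open set `s` :
every `C²` function touching `v` from below at a point of `s` has Laplacian at most `f` there. -/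
def ViscSupersol {m : ℕ} (v f : EuclideanSpace ℝ (Fin m) → ℝ)
    (s : Set (EuclideanSpace ℝ (Fin m))) : Prop :=
  ∀ z₀ ∈ s, ∀ ψ : EuclideanSpace ℝ (Fin m) → ℝ, ∀ ρ > (0:ℝ),
    ball z₀ ρ ⊆ s → ContDiffOn ℝ 2 ψ (ball z₀ ρ) →
    (∀ z ∈ ball z₀ ρ, ψ z ≤ v z) → ψ z₀ = v z₀ → lapR ψ z₀ ≤ f z₀

lemma abp_lip_local {m : ℕ} (S : Set (EuclideanSpace ℝ (Fin m)))
    (G : EuclideanSpace ℝ (Fin m) → EuclideanSpace ℝ (Fin m)) (K : NNReal)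
    (h : ∀ x ∈ S, ∃ r > (0:ℝ), ∀ y ∈ S, dist y x < r → dist (G y) (G x) ≤ K * dist y x) :
    volume (G '' S) ≤ (K : ENNReal) ^ m * volume S := by
  have hlip : ∀ T : Set (EuclideanSpace ℝ (Fin m)), LipschitzOnWith K G T →
      volume (G '' T) ≤ (K : ENNReal) ^ m * volume T := by
    intro T hT
    have h1 := hT.hausdorffMeasure_image_le (d := (Module.finrank ℝ (EuclideanSpace ℝ (Fin m)) : ℝ))
      (by positivity)
    have h2 := Measure.isAddLeftInvariant_eq_smul
      (volume : Measure (EuclideanSpace ℝ (Fin m)))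
      (Measure.hausdorffMeasure (Module.finrank ℝ (EuclideanSpace ℝ (Fin m)) : ℝ))
    rw [h2]
    simp only [Measure.smul_apply]
    generalize Measure.addHaarScalarFactor (volume : Measure (EuclideanSpace ℝ (Fin m)))
      (Measure.hausdorffMeasure (Module.finrank ℝ (EuclideanSpace ℝ (Fin m)) : ℝ)) = a
    rw [ENNReal.rpow_natCast, finrank_euclideanSpace_fin] at h1
    rw [finrank_euclideanSpace_fin]
    rw [ENNReal.smul_def, ENNReal.smul_def, smul_eq_mul, smul_eq_mul, mul_left_comm]
    gcongr
  let Sn : ℕ → Set (EuclideanSpace ℝ (Fin m)) := fun n =>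
    {x ∈ S | ∀ y ∈ S, dist y x < 1 / ((n:ℝ) + 1) → dist (G y) (G x) ≤ K * dist y x}
  have hmono : Monotone Sn := by
    intro a b hab x hx
    refine ⟨hx.1, fun y hy hd => hx.2 y hy (hd.trans_le ?_)⟩
    gcongr
  have hU : ⋃ n, Sn n = S := by
    apply subset_antisymm
    · exact iUnion_subset fun n x hx => hx.1
    · intro x hx
      obtain ⟨r, hr, hr'⟩ := h x hx
      obtain ⟨n, hn⟩ := exists_nat_one_div_lt hr
      exact mem_iUnion.2 ⟨n, hx, fun y hy hd => hr' y hy (hd.trans hn)⟩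
  have hSn : ∀ n, volume (G '' Sn n) ≤ (K : ENNReal) ^ m * volume (Sn n) := by
    intro n
    obtain ⟨Q, hQm, hQb, hQd, hQu, hQp⟩ :=
      SeparableSpace.exists_measurable_partition_diam_le (EuclideanSpace ℝ (Fin m))
        (ε := 1 / ((n:ℝ) + 1) / 2) (by positivity)
    have e1 : Sn n = ⋃ j, Sn n ∩ Q j := by rw [← inter_iUnion, hQu, inter_univ]
    have e2 : volume (Sn n) = ∑' j, volume (Sn n ∩ Q j) := by
      have := measure_iUnion (μ := volume.restrict (Sn n)) hQp hQm
      rw [hQu, Measure.restrict_apply_univ] at this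
      rw [this]
      congr 1
      ext j
      rw [Measure.restrict_apply (hQm j), inter_comm]
    calc volume (G '' Sn n) = volume (⋃ j, G '' (Sn n ∩ Q j)) := by
          conv_lhs => rw [e1]
          rw [image_iUnion]
      _ ≤ ∑' j, volume (G '' (Sn n ∩ Q j)) := measure_iUnion_le _
      _ ≤ ∑' j, (K : ENNReal) ^ m * volume (Sn n ∩ Q j) := by
          refine ENNReal.tsum_le_tsum fun j => hlip _ ?_
          refine LipschitzOnWith.of_dist_le_mul fun x hx y hy => ?_
          refine hy.1.2 x hx.1.1 ?_
          have h3 := (dist_le_diam_of_mem (hQb j) hx.2 hy.2).trans (hQd j)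
          have : (0:ℝ) < 1 / ((n:ℝ) + 1) := by positivity
          linarith
      _ = (K : ENNReal) ^ m * volume (Sn n) := by rw [ENNReal.tsum_mul_left, ← e2]
  have hG : G '' S = ⋃ n, G '' Sn n := by rw [← image_iUnion, hU]
  rw [hG, Monotone.measure_iUnion (fun a b hab => image_mono (hmono hab))]
  refine iSup_le fun n => (hSn n).trans ?_
  gcongr
  exact fun x hx => hx.1


lemma abp_contDiff {m : ℕ} (p d x0 : EuclideanSpace ℝ (Fin m)) (c κ b γ : ℝ) :
    ContDiff ℝ 2 (fun x : EuclideanSpace ℝ (Fin m) =>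
      c + inner ℝ p x + κ * ((inner ℝ d (x - x0) + b) ^ 2 - γ * ‖x - x0‖ ^ 2)) := by
  have h1 : ContDiff ℝ 2 (fun x : EuclideanSpace ℝ (Fin m) => inner ℝ p x) :=
    contDiff_const.inner ℝ contDiff_id
  have h0 : ContDiff ℝ 2 (fun x : EuclideanSpace ℝ (Fin m) => x - x0) :=
    contDiff_id.sub contDiff_const
  have h2 : ContDiff ℝ 2 (fun x : EuclideanSpace ℝ (Fin m) => inner ℝ d (x - x0)) :=
    contDiff_const.inner ℝ h0
  have h3 : ContDiff ℝ 2 (fun x : EuclideanSpace ℝ (Fin m) => ‖x - x0‖ ^ 2) := h0.norm_sq ℝ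
  exact (contDiff_const.add h1).add (contDiff_const.mul
    (((h2.add contDiff_const).pow 2).sub (contDiff_const.mul h3)))

lemma abp_hasFDerivAt_inner {m : ℕ} (d x0 x : EuclideanSpace ℝ (Fin m)) :
    HasFDerivAt (fun x => inner ℝ d (x - x0)) (innerSL ℝ d) x := by
  have hid : HasFDerivAt (fun x => x - x0) (ContinuousLinearMap.id ℝ (EuclideanSpace ℝ (Fin m))) x :=
    (hasFDerivAt_id x).sub_const x0
  exact ((innerSL ℝ d).hasFDerivAt (x := x - x0)).comp x hid

lemma abp_lap {m : ℕ} (p d x0 z : EuclideanSpace ℝ (Fin m)) (c κ b γ : ℝ) :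
    lapR (fun x => c + inner ℝ p x + κ * ((inner ℝ d (x - x0) + b) ^ 2 - γ * ‖x - x0‖ ^ 2)) z
      = κ * (2 * ‖d‖ ^ 2 - 2 * γ * m) := by
  have hC := abp_contDiff p d x0 c κ b γ
  set ψ := (fun x : EuclideanSpace ℝ (Fin m) =>
      c + inner ℝ p x + κ * ((inner ℝ d (x - x0) + b) ^ 2 - γ * ‖x - x0‖ ^ 2)) with hψ
  have h1 : ∀ x e : EuclideanSpace ℝ (Fin m), fderiv ℝ ψ x e =
      inner ℝ p e + κ * (2 * (inner ℝ d (x - x0) + b) * inner ℝ d e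
        - γ * (2 * inner ℝ e (x - x0))) := by
    intro x e
    have hp : HasFDerivAt (fun x => inner ℝ p x) (innerSL ℝ p) x := (innerSL ℝ p).hasFDerivAt
    have hid : HasFDerivAt (fun x => x - x0) (ContinuousLinearMap.id ℝ (EuclideanSpace ℝ (Fin m))) x :=
      (hasFDerivAt_id x).sub_const x0
    have hd := abp_hasFDerivAt_inner d x0 x
    have := (hp.const_add c).add ((((hd.add_const b).pow 2).sub ((hid.norm_sq).const_mul γ)).const_mul κ)
    have h := HasFDerivAt.fderiv (f := ψ) this
    rw [h]
    rw [real_inner_comm (x - x0) e]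
    simp [inner_sub_left x x0 e]
    left
    left
    ring
  have h2 : ∀ e : EuclideanSpace ℝ (Fin m), fderiv ℝ (fderiv ℝ ψ) z e e =
      κ * (2 * inner ℝ d e * inner ℝ d e - γ * (2 * inner ℝ e e)) := by
    intro e
    have hdiff : DifferentiableAt ℝ (fderiv ℝ ψ) z :=
      ((hC.fderiv_right (m := 1) (by norm_num)).differentiable (by norm_num)) z
    have e1 : fderiv ℝ (fun x => fderiv ℝ ψ x e) z = (fderiv ℝ (fderiv ℝ ψ) z).flip e := by
      rw [fderiv_clm_apply hdiff (differentiableAt_const e)]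
      ext y
      simp
    have e2 : fderiv ℝ (fderiv ℝ ψ) z e e = fderiv ℝ (fun x => fderiv ℝ ψ x e) z e := by
      rw [e1]; rfl
    rw [e2]
    have e3 : (fun x => fderiv ℝ ψ x e) = fun x => inner ℝ p e + κ * (2 * (inner ℝ d (x - x0) + b) * inner ℝ d e
        - γ * (2 * inner ℝ e (x - x0))) := funext fun x => h1 x e
    rw [e3]
    have hd := abp_hasFDerivAt_inner d x0 z
    have he := abp_hasFDerivAt_inner e x0 z
    have := ((((((hd.add_const b).const_mul 2).mul_const (inner ℝ d e)).sub
      ((he.const_mul (2:ℝ)).const_mul γ)).const_mul κ).const_add (inner ℝ p e))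
    have h := HasFDerivAt.fderiv (f := fun x => inner ℝ p e + κ * (2 * (inner ℝ d (x - x0) + b) * inner ℝ d e
        - γ * (2 * inner ℝ e (x - x0)))) this
    rw [h]
    simp
    left
    ring
  unfold lapR
  simp only [iteratedFDeriv_two_apply]
  simp only [Matrix.cons_val_zero, Matrix.cons_val_one, h2, EuclideanSpace.norm_sq_eq,
    Real.norm_eq_abs, sq_abs]
  simp only [EuclideanSpace.inner_single_right, ← Finset.mul_sum, Finset.sum_sub_distrib]
  simp only [mul_assoc, ← Finset.mul_sum]
  simp
  left
  simp only [sq]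
  ring

lemma abp_key {m : ℕ} (hm : 0 < m) (δ : ℝ) (v f : EuclideanSpace ℝ (Fin m) → ℝ)
    (hδ : 0 < δ)
    (hlsc : LowerSemicontinuousOn v (closedBall (0 : EuclideanSpace ℝ (Fin m)) (2 * δ)))
    (hvisc : ViscSupersol v f (ball (0 : EuclideanSpace ℝ (Fin m)) (2 * δ)))
    (x0 x1 p q : EuclideanSpace ℝ (Fin m)) (r B : ℝ) (hr : 0 < r) (hB : 0 ≤ B)
    (hsub : closedBall x0 (8 * m * r) ⊆ ball (0 : EuclideanSpace ℝ (Fin m)) δ)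
    (hp : ∀ x ∈ ball (0 : EuclideanSpace ℝ (Fin m)) δ, v x0 + inner ℝ p (x - x0) ≤ v x)
    (hq : ∀ x ∈ ball (0 : EuclideanSpace ℝ (Fin m)) δ, v x1 + inner ℝ q (x - x1) ≤ v x)
    (hx1 : x1 ∈ ball (0 : EuclideanSpace ℝ (Fin m)) δ)
    (hr1 : ‖x1 - x0‖ ≤ r) (hf : ∀ z ∈ closedBall x0 (8 * m * r), f z ≤ B) :
    ‖q - p‖ ≤ 16 * B * r := by
  by_contra hcon
  push Not at hcon
  have hm1 : (1:ℝ) ≤ m := by exact_mod_cast hm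
  set d := q - p with hd
  set D := ‖d‖ with hD
  have hDpos : 0 < D := lt_of_le_of_lt (by positivity) hcon
  set κ : ℝ := 1 / (16 * D * r) with hκ
  have hκpos : 0 < κ := by positivity
  set γ : ℝ := D ^ 2 / (2 * m) with hγ
  have hγpos : 0 < γ := by positivity
  set c := v x0 - inner ℝ p x0 with hc
  let ψ : EuclideanSpace ℝ (Fin m) → ℝ := fun x =>
    c + inner ℝ p x + κ * ((inner ℝ d (x - x0) + 2 * D * r) ^ 2 - γ * ‖x - x0‖ ^ 2)
  have hψC : ContDiff ℝ 2 ψ := abp_contDiff p d x0 c κ (2 * D * r) γ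
  have hψv : ∀ x, ψ x = v x0 + inner ℝ p (x - x0) +
      κ * ((inner ℝ d (x - x0) + 2 * D * r) ^ 2 - γ * ‖x - x0‖ ^ 2) := by
    intro x
    simp only [ψ, hc, inner_sub_right]
    ring
  have hin : Continuous fun x : EuclideanSpace ℝ (Fin m) => inner ℝ d (x - x0) := by fun_prop
  let K : Set (EuclideanSpace ℝ (Fin m)) :=
    closedBall x0 (8 * m * r) ∩ {x | |inner ℝ d (x - x0)| ≤ 2 * D * r}
  have hK : IsCompact K := (isCompact_closedBall _ _).inter_right
    (isClosed_le hin.abs continuous_const)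
  have hx0K : x0 ∈ K := ⟨mem_closedBall_self (by positivity), by simp; positivity⟩
  have hδ2 : ball (0 : EuclideanSpace ℝ (Fin m)) δ ⊆ ball 0 (2 * δ) := ball_subset_ball (by linarith)
  have hKδ : K ⊆ ball (0 : EuclideanSpace ℝ (Fin m)) δ := fun x hx => hsub hx.1
  have hK2 : K ⊆ closedBall (0 : EuclideanSpace ℝ (Fin m)) (2 * δ) := fun x hx =>
    ball_subset_closedBall (hδ2 (hKδ hx))
  have hlscK : LowerSemicontinuousOn (fun x => v x + -ψ x) K :=
    (hlsc.mono hK2).add (hψC.continuous.neg.lowerSemicontinuous.lowerSemicontinuousOn K)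
  obtain ⟨z, hzK, hzmin⟩ := LowerSemicontinuousOn.exists_isMinOn ⟨x0, hx0K⟩ hK hlscK
  have hzneg : v z - ψ z < 0 := by
    have h1 := isMinOn_iff.1 hzmin x0 hx0K
    have h2 : ψ x0 = v x0 + κ * (2 * D * r) ^ 2 := by rw [hψv]; simp
    have h3 : 0 < κ * (2 * D * r) ^ 2 := by positivity
    linarith
  have hpz := hp z (hKδ hzK)
  have hκD : κ * (16 * D ^ 2 * r ^ 2) = D * r := by rw [hκ]; field_simp
  have hz2 : |inner ℝ d (z - x0)| ≤ 2 * D * r := hzK.2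
  have hz1 : ‖z - x0‖ ≤ 8 * m * r := by simpa [dist_eq_norm] using hzK.1
  have hsq : (inner ℝ d (z - x0) + 2 * D * r) ^ 2 ≤ 16 * D ^ 2 * r ^ 2 := by
    obtain ⟨ha, hb⟩ := abs_le.1 hz2
    nlinarith
  have hbound : v x0 + inner ℝ p (z - x0) < ψ z := by linarith
  have hint1 : ‖z - x0‖ < 8 * m * r := by
    refine lt_of_le_of_ne hz1 fun heq => ?_
    have h4 : γ * ‖z - x0‖ ^ 2 = 32 * m * D ^ 2 * r ^ 2 := by
      rw [heq, hγ]; field_simp; ring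
    have h5 : (inner ℝ d (z - x0) + 2 * D * r) ^ 2 - γ * ‖z - x0‖ ^ 2 ≤ 0 := by
      rw [h4]
      have : 0 ≤ (m - 1) * (D ^ 2 * r ^ 2) := mul_nonneg (by linarith) (by positivity)
      nlinarith [sq_nonneg (D * r)]
    have h6 := mul_nonpos_of_nonneg_of_nonpos hκpos.le h5
    rw [hψv] at hzneg
    linarith
  have hint2 : |inner ℝ d (z - x0)| < 2 * D * r := by
    refine lt_of_le_of_ne hz2 fun heq => ?_
    have hg : 0 ≤ γ * ‖z - x0‖ ^ 2 := by positivity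
    rcases (abs_eq (by positivity)).1 heq with h | h
    · have h5 : κ * ((inner ℝ d (z - x0) + 2 * D * r) ^ 2 - γ * ‖z - x0‖ ^ 2) ≤ D * r := by
        rw [← hκD]
        gcongr
        linarith
      have h6 := hq z (hKδ hzK)
      have h7 := hp x1 hx1
      have h8 : inner ℝ d (x1 - x0) ≤ D * r :=
        (real_inner_le_norm _ _).trans (by gcongr)
      have h9 : inner ℝ p (x1 - x0) + inner ℝ q (z - x1) - inner ℝ p (z - x0)
          = inner ℝ d (z - x0) - inner ℝ d (x1 - x0) := by
        simp only [hd, inner_sub_right, inner_sub_left]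
        ring
      rw [hψv] at hzneg
      linarith
    · have h5 : κ * ((inner ℝ d (z - x0) + 2 * D * r) ^ 2 - γ * ‖z - x0‖ ^ 2) ≤ 0 := by
        rw [h]
        apply mul_nonpos_of_nonneg_of_nonpos hκpos.le
        have : (-(2 * D * r) + 2 * D * r) ^ 2 = 0 := by ring
        linarith
      rw [hψv] at hzneg
      linarith
  have hopen : IsOpen (ball x0 (8 * m * r) ∩ {x | |inner ℝ d (x - x0)| < 2 * D * r}) :=
    isOpen_ball.inter (isOpen_lt hin.abs continuous_const)
  obtain ⟨ρ, hρ, hρs⟩ := Metric.isOpen_iff.1 hopen z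
    ⟨by simpa [dist_eq_norm] using hint1, hint2⟩
  have hρK : ball z ρ ⊆ K := fun x hx =>
    ⟨ball_subset_closedBall (hρs hx).1, (show |inner ℝ d (x - x0)| < 2 * D * r from (hρs hx).2).le⟩
  have hfin := hvisc z (hδ2 (hKδ hzK)) (fun x =>
    (c + (v z - ψ z)) + inner ℝ p x
      + κ * ((inner ℝ d (x - x0) + 2 * D * r) ^ 2 - γ * ‖x - x0‖ ^ 2)) ρ hρ
    (fun x hx => hδ2 (hKδ (hρK hx)))
    (abp_contDiff p d x0 _ κ (2 * D * r) γ).contDiffOn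
    (by
      intro x hx
      have h1 := isMinOn_iff.1 hzmin x (hρK hx)
      simp only [ψ] at h1 ⊢
      linarith)
    (by simp only [ψ]; ring)
  rw [abp_lap] at hfin
  have h10 : κ * (2 * ‖d‖ ^ 2 - 2 * γ * m) = D / (16 * r) := by
    rw [hκ, hγ, ← hD]; field_simp; ring
  rw [h10] at hfin
  have h11 := hf z hzK.1
  have h12 : D / (16 * r) ≤ B := hfin.trans h11
  rw [div_le_iff₀ (by positivity)] at h12
  linarith

lemma abp_local {m : ℕ} (hm : 0 < m) (δ : ℝ) (v f : EuclideanSpace ℝ (Fin m) → ℝ)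
    (hδ : 0 < δ)
    (hlsc : LowerSemicontinuousOn v (closedBall (0 : EuclideanSpace ℝ (Fin m)) (2 * δ)))
    (hcont : ContinuousOn f (ball (0 : EuclideanSpace ℝ (Fin m)) (2 * δ)))
    (hvisc : ViscSupersol v f (ball (0 : EuclideanSpace ℝ (Fin m)) (2 * δ)))
    (x0 p : EuclideanSpace ℝ (Fin m)) (ε : ℝ) (hε : 0 < ε)
    (hx0 : x0 ∈ ball (0 : EuclideanSpace ℝ (Fin m)) δ)
    (hp : ∀ x ∈ ball (0 : EuclideanSpace ℝ (Fin m)) δ, v x0 + inner ℝ p (x - x0) ≤ v x) :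
    ∃ r0 > (0:ℝ), ∀ x1 ∈ ball (0 : EuclideanSpace ℝ (Fin m)) δ, ∀ q,
      (∀ x ∈ ball (0 : EuclideanSpace ℝ (Fin m)) δ, v x1 + inner ℝ q (x - x1) ≤ v x) →
      ∀ r, 0 < r → r < r0 → ‖x1 - x0‖ ≤ r → ‖q - p‖ ≤ 16 * (max (f x0) 0 + ε) * r := by
  have hm1 : (1:ℝ) ≤ m := by exact_mod_cast hm
  have hδ2 : ball (0 : EuclideanSpace ℝ (Fin m)) δ ⊆ ball 0 (2 * δ) := ball_subset_ball (by linarith)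
  have hc : ContinuousAt f x0 := hcont.continuousAt (isOpen_ball.mem_nhds (hδ2 hx0))
  have h1 : ∀ᶠ z in 𝓝 x0, z ∈ ball (0 : EuclideanSpace ℝ (Fin m)) δ ∧ f z < max (f x0) 0 + ε := by
    refine Filter.Eventually.and (isOpen_ball.mem_nhds hx0) ?_
    refine hc.eventually_lt continuousAt_const ?_
    have := le_max_left (f x0) 0
    linarith
  obtain ⟨s, hs, hs'⟩ := Metric.eventually_nhds_iff_ball.1 h1
  refine ⟨s / (8 * m), by positivity, fun x1 hx1 q hq r hr hrs hxr => ?_⟩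
  have hrs' : 8 * m * r < s := by
    rw [lt_div_iff₀ (by positivity)] at hrs
    linarith
  have hsub : closedBall x0 (8 * m * r) ⊆ ball x0 s := closedBall_subset_ball hrs'
  exact abp_key hm δ v f hδ hlsc hvisc x0 x1 p q r _ hr (by positivity)
    (fun z hz => (hs' z (hsub hz)).1) hp hq hx1 hxr (fun z hz => (hs' z (hsub hz)).2.le)

lemma abp_contact {m : ℕ} (δ : ℝ) (v : EuclideanSpace ℝ (Fin m) → ℝ)
    (hδ : 0 < δ)
    (hlsc : LowerSemicontinuousOn v (closedBall (0 : EuclideanSpace ℝ (Fin m)) (2 * δ)))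
    (hbdd : BddBelow (v '' ball (0 : EuclideanSpace ℝ (Fin m)) δ))
    (hnn : ∀ z ∈ ball (0 : EuclideanSpace ℝ (Fin m)) (2 * δ) \
          ball (0 : EuclideanSpace ℝ (Fin m)) δ, 0 ≤ v z)
    (M : ℝ) (hM : M = -sInf (v '' ball (0 : EuclideanSpace ℝ (Fin m)) δ)) (hMpos : 0 < M)
    (p : EuclideanSpace ℝ (Fin m)) (hp : ‖p‖ < M / (4 * δ)) :
    ∃ x ∈ ball (0 : EuclideanSpace ℝ (Fin m)) δ ∩ {z | v z = convEnv δ v z},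
      ∀ y ∈ ball (0 : EuclideanSpace ℝ (Fin m)) δ, v x + inner ℝ p (y - x) ≤ v y := by
  have hpδ : ‖p‖ * δ < M / 4 := by
    rw [lt_div_iff₀ (by positivity)] at hp
    linarith
  have hlsc2 : LowerSemicontinuousOn (fun x => v x + -inner ℝ p x)
      (closedBall (0 : EuclideanSpace ℝ (Fin m)) δ) := by
    refine (hlsc.mono (closedBall_subset_closedBall (by linarith))).add ?_
    have : Continuous fun x : EuclideanSpace ℝ (Fin m) => -inner ℝ p x := by fun_prop
    exact this.lowerSemicontinuous.lowerSemicontinuousOn _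
  obtain ⟨x, hx, hmin⟩ := LowerSemicontinuousOn.exists_isMinOn
    ⟨0, mem_closedBall_self hδ.le⟩ (isCompact_closedBall _ _) hlsc2
  have hmin' : ∀ y ∈ closedBall (0 : EuclideanSpace ℝ (Fin m)) δ,
      v x + inner ℝ p (y - x) ≤ v y := by
    intro y hy
    have := isMinOn_iff.1 hmin y hy
    rw [inner_sub_right]
    linarith
  set c := v x - inner ℝ p x with hc
  have habs : ∀ y : EuclideanSpace ℝ (Fin m), ∀ s, ‖y‖ ≤ s → |inner ℝ p y| ≤ ‖p‖ * s := fun y s hy =>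
    (abs_real_inner_le_norm p y).trans (by gcongr)
  have hcM : c ≤ -M + ‖p‖ * δ := by
    have : c - ‖p‖ * δ ≤ sInf (v '' ball (0 : EuclideanSpace ℝ (Fin m)) δ) := by
      refine le_csInf ⟨v 0, 0, mem_ball_self hδ, rfl⟩ ?_
      rintro _ ⟨y, hy, rfl⟩
      have h1 := hmin' y (ball_subset_closedBall hy)
      rw [inner_sub_right] at h1
      have h2 := (abs_le.1 (habs y δ (by simpa using (mem_ball_zero_iff.1 hy).le))).1
      linarith
    linarith
  have hxn : ‖x‖ ≤ δ := by simpa using hx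
  have hvx : v x < 0 := by
    have := (abs_le.1 (habs x δ hxn)).2
    linarith
  have hxb : x ∈ ball (0 : EuclideanSpace ℝ (Fin m)) δ := by
    by_contra hcon
    have := hnn x ⟨closedBall_subset_ball (by linarith) hx, hcon⟩
    linarith
  have hbig : ∀ y ∈ ball (0 : EuclideanSpace ℝ (Fin m)) (2 * δ), c + inner ℝ p y ≤ 0 := by
    intro y hy
    have := (abs_le.1 (habs y (2 * δ) (mem_ball_zero_iff.1 hy).le)).2
    linarith
  refine ⟨x, ⟨hxb, ?_⟩, fun y hy => hmin' y (ball_subset_closedBall hy)⟩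
  let l : EuclideanSpace ℝ (Fin m) →ᵃ[ℝ] ℝ :=
    ((innerSL ℝ p : EuclideanSpace ℝ (Fin m) →L[ℝ] ℝ) : EuclideanSpace ℝ (Fin m) →ₗ[ℝ] ℝ).toAffineMap
      + AffineMap.const ℝ _ c
  have hl : ∀ y, l y = inner ℝ p y + c := fun y => by simp [l]
  have hub : ∀ w ∈ {y : ℝ | ∃ l : EuclideanSpace ℝ (Fin m) →ᵃ[ℝ] ℝ,
    (∀ x ∈ ball (0 : EuclideanSpace ℝ (Fin m)) δ, l x ≤ v x) ∧
    (∀ x ∈ ball (0 : EuclideanSpace ℝ (Fin m)) (2 * δ) \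
        ball (0 : EuclideanSpace ℝ (Fin m)) δ, l x ≤ 0) ∧
    y = l x}, w ≤ v x := by
    rintro w ⟨l', h1, -, rfl⟩
    exact h1 x hxb
  have hmem : v x ∈ {y : ℝ | ∃ l : EuclideanSpace ℝ (Fin m) →ᵃ[ℝ] ℝ,
    (∀ x ∈ ball (0 : EuclideanSpace ℝ (Fin m)) δ, l x ≤ v x) ∧
    (∀ x ∈ ball (0 : EuclideanSpace ℝ (Fin m)) (2 * δ) \
        ball (0 : EuclideanSpace ℝ (Fin m)) δ, l x ≤ 0) ∧
    y = l x} := by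
    refine ⟨l, fun y hy => ?_, fun y hy => ?_, ?_⟩
    · have h1 := hmin' y (ball_subset_closedBall hy)
      rw [inner_sub_right] at h1
      rw [hl]; linarith
    · rw [hl]; linarith [hbig y hy.1]
    · rw [hl]; linarith
  show v x = convEnv δ v x
  unfold convEnv
  exact le_antisymm (le_csSup ⟨v x, hub⟩ hmem) (csSup_le ⟨_, hmem⟩ hub)

lemma abp_core {m : ℕ} (hm : 0 < m) (δ : ℝ) (v f : EuclideanSpace ℝ (Fin m) → ℝ)
    (hδ : 0 < δ)
    (hlsc : LowerSemicontinuousOn v (closedBall (0 : EuclideanSpace ℝ (Fin m)) (2 * δ)))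
    (hbdd : BddBelow (v '' ball (0 : EuclideanSpace ℝ (Fin m)) δ))
    (hnn : ∀ z ∈ ball (0 : EuclideanSpace ℝ (Fin m)) (2 * δ) \
          ball (0 : EuclideanSpace ℝ (Fin m)) δ, 0 ≤ v z)
    (hcont : ContinuousOn f (ball (0 : EuclideanSpace ℝ (Fin m)) (2 * δ)))
    (hvisc : ViscSupersol v f (ball (0 : EuclideanSpace ℝ (Fin m)) (2 * δ)))
    (hmeas : Measurable f)
    (M : ℝ) (hM : M = -sInf (v '' ball (0 : EuclideanSpace ℝ (Fin m)) δ)) (hMpos : 0 < M)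
    (ε : ℝ) (hε : 0 < ε) :
    volume (ball (0 : EuclideanSpace ℝ (Fin m)) (M / (4 * δ))) ≤
      ∫⁻ z in ball (0 : EuclideanSpace ℝ (Fin m)) δ ∩ {z | v z = convEnv δ v z},
        ENNReal.ofReal ((16 * (max (f z) 0 + 2 * ε)) ^ m) := by
  set R := M / (4 * δ) with hR
  set A := ball (0 : EuclideanSpace ℝ (Fin m)) δ ∩ {z | v z = convEnv δ v z} with hA
  have hex : ∀ p : EuclideanSpace ℝ (Fin m), ∃ x, p ∈ ball (0 : EuclideanSpace ℝ (Fin m)) R →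
      x ∈ A ∧ ∀ y ∈ ball (0 : EuclideanSpace ℝ (Fin m)) δ, v x + inner ℝ p (y - x) ≤ v y := by
    intro p
    by_cases hp : p ∈ ball (0 : EuclideanSpace ℝ (Fin m)) R
    · obtain ⟨x, h1, h2⟩ := abp_contact δ v hδ hlsc hbdd hnn M hM hMpos p (mem_ball_zero_iff.1 hp)
      exact ⟨x, fun _ => ⟨h1, h2⟩⟩
    · exact ⟨0, fun h => absurd h hp⟩
  choose X hX using hex
  set D := ball (0 : EuclideanSpace ℝ (Fin m)) R with hD
  have hinj : InjOn X D := by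
    intro p hp q hq hpq
    obtain ⟨r0, hr0, hloc⟩ := abp_local hm δ v f hδ hlsc hcont hvisc (X p) p 1 one_pos
      (hX p hp).1.1 (hX p hp).2
    have hle : ‖q - p‖ ≤ 0 := by
      refine le_of_forall_pos_lt_add fun t ht => ?_
      set B := 16 * (max (f (X p)) 0 + 1) with hB
      have hBpos : 0 < B := by positivity
      have hr : 0 < min (r0 / 2) (t / (2 * B)) := by positivity
      have h1 := hloc (X q) (hX q hq).1.1 q (hX q hq).2 (min (r0 / 2) (t / (2 * B))) hr
        ((min_le_left _ _).trans_lt (by linarith)) (by rw [hpq]; simpa using hr.le)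
      have h2 : B * min (r0 / 2) (t / (2 * B)) ≤ B * (t / (2 * B)) := by
        gcongr
        exact min_le_right _ _
      have h3 : B * (t / (2 * B)) = t / 2 := by field_simp
      linarith
    exact (sub_eq_zero.1 (norm_le_zero_iff.1 hle)).symm
  let G := Function.invFunOn X D
  have hG1 : ∀ x ∈ X '' D, G x ∈ D ∧ X (G x) = x := fun x hx =>
    ⟨Function.invFunOn_mem hx, Function.invFunOn_eq hx⟩
  have hG2 : ∀ p ∈ D, G (X p) = p := fun p hp => hinj.leftInvOn_invFunOn hp
  have hXA : X '' D ⊆ A := by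
    rintro _ ⟨p, hp, rfl⟩
    exact (hX p hp).1
  let L : ℕ → Set (EuclideanSpace ℝ (Fin m)) := fun j => {z | ⌊max (f z) 0 / ε⌋₊ = j}
  have hLm : ∀ j, MeasurableSet (L j) := fun j =>
    (Nat.measurable_floor.comp ((hmeas.max measurable_const).div_const ε)) (measurableSet_singleton j)
  have hLd : Pairwise (fun i j => Disjoint (L i) (L j)) := by
    intro i j hij
    refine Set.disjoint_left.2 fun z hz hz' => hij ?_
    exact hz.symm.trans hz'
  have hLu : ⋃ j, L j = univ := eq_univ_of_forall fun z => mem_iUnion.2 ⟨_, rfl⟩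
  have hcov : D ⊆ ⋃ j, G '' (X '' D ∩ L j) := by
    intro p hp
    refine mem_iUnion.2 ⟨⌊max (f (X p)) 0 / ε⌋₊, X p, ⟨⟨p, hp, rfl⟩, rfl⟩, hG2 p hp⟩
  have hpiece : ∀ j, volume (G '' (X '' D ∩ L j)) ≤
      ∫⁻ z in L j, ENNReal.ofReal ((16 * (max (f z) 0 + 2 * ε)) ^ m) ∂(volume.restrict A) := by
    intro j
    have hKnn : (0:ℝ) ≤ 16 * ((j + 2) * ε) := by positivity
    have h1 := abp_lip_local (X '' D ∩ L j) G ⟨16 * ((j + 2) * ε), hKnn⟩ (by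
      rintro x ⟨hx, hxL⟩
      obtain ⟨hGD, hXG⟩ := hG1 x hx
      have hGx := hX (G x) hGD
      rw [hXG] at hGx
      obtain ⟨r0, hr0, hloc⟩ := abp_local hm δ v f hδ hlsc hcont hvisc x (G x) ε hε
        hGx.1.1 hGx.2
      refine ⟨r0, hr0, ?_⟩
      rintro y ⟨hy, -⟩ hyx
      rcases eq_or_ne y x with rfl | hne
      · simp
      obtain ⟨hGDy, hXGy⟩ := hG1 y hy
      have hGy := hX (G y) hGDy
      rw [hXGy] at hGy
      have h2 := hloc y hGy.1.1 (G y) hGy.2 (dist y x) (dist_pos.2 hne) hyx (by rw [dist_eq_norm])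
      rw [dist_eq_norm (G y)]
      refine h2.trans ?_
      show _ ≤ 16 * ((j + 2) * ε) * dist y x
      gcongr
      have h3 := Nat.lt_floor_add_one (max (f x) 0 / ε)
      have h4 : ⌊max (f x) 0 / ε⌋₊ = j := hxL
      rw [h4, div_lt_iff₀ hε] at h3
      linarith)
    refine h1.trans ?_
    calc _ ≤ ENNReal.ofReal ((16 * ((j + 2) * ε)) ^ m) * volume (A ∩ L j) := by
          gcongr
          rw [ENNReal.ofReal_pow hKnn, ENNReal.ofReal_eq_coe_nnreal hKnn]
          exact le_rfl
      _ = ∫⁻ z in L j, ENNReal.ofReal ((16 * ((j + 2) * ε)) ^ m) ∂(volume.restrict A) := by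
          rw [setLIntegral_const, Measure.restrict_apply (hLm j), inter_comm]
      _ ≤ _ := by
          refine setLIntegral_mono' (hLm j) fun z hz => ?_
          apply ENNReal.ofReal_le_ofReal
          gcongr
          have h3 := Nat.floor_le (a := max (f z) 0 / ε) (by positivity)
          have h4 : ⌊max (f z) 0 / ε⌋₊ = j := hz
          rw [h4, le_div_iff₀ hε] at h3
          linarith
  calc volume D ≤ volume (⋃ j, G '' (X '' D ∩ L j)) := measure_mono hcov
    _ ≤ ∑' j, volume (G '' (X '' D ∩ L j)) := measure_iUnion_le _
    _ ≤ ∑' j, ∫⁻ z in L j, ENNReal.ofReal ((16 * (max (f z) 0 + 2 * ε)) ^ m) ∂(volume.restrict A) :=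
        ENNReal.tsum_le_tsum hpiece
    _ = _ := by rw [← lintegral_iUnion hLm hLd, hLu, Measure.restrict_univ]

lemma abp_core2 {m : ℕ} (hm : 0 < m) (δ : ℝ) (v f : EuclideanSpace ℝ (Fin m) → ℝ)
    (hδ : 0 < δ)
    (hlsc : LowerSemicontinuousOn v (closedBall (0 : EuclideanSpace ℝ (Fin m)) (2 * δ)))
    (hbdd : BddBelow (v '' ball (0 : EuclideanSpace ℝ (Fin m)) δ))
    (hnn : ∀ z ∈ ball (0 : EuclideanSpace ℝ (Fin m)) (2 * δ) \
          ball (0 : EuclideanSpace ℝ (Fin m)) δ, 0 ≤ v z)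
    (hcont : ContinuousOn f (ball (0 : EuclideanSpace ℝ (Fin m)) (2 * δ)))
    (hvisc : ViscSupersol v f (ball (0 : EuclideanSpace ℝ (Fin m)) (2 * δ)))
    (M : ℝ) (hM : M = -sInf (v '' ball (0 : EuclideanSpace ℝ (Fin m)) δ)) (hMpos : 0 < M) :
    (M / (4 * δ)) ^ m * (volume (ball (0 : EuclideanSpace ℝ (Fin m)) 1)).toReal ≤
      32 ^ m * ∫ z in ball (0 : EuclideanSpace ℝ (Fin m)) δ ∩ {z | v z = convEnv δ v z},
        max (f z) 0 ^ m := by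
  classical
  set A := ball (0 : EuclideanSpace ℝ (Fin m)) δ ∩ {z | v z = convEnv δ v z} with hA
  have hδ2 : ball (0 : EuclideanSpace ℝ (Fin m)) δ ⊆ ball 0 (2 * δ) := ball_subset_ball (by linarith)
  let f' := (ball (0 : EuclideanSpace ℝ (Fin m)) (2 * δ)).piecewise f 0
  have hff' : ∀ z ∈ ball (0 : EuclideanSpace ℝ (Fin m)) (2 * δ), f' z = f z := fun z hz =>
    Set.piecewise_eq_of_mem _ _ _ hz
  have hmeas : Measurable f' := ContinuousOn.measurable_piecewise hcont
    continuous_zero.continuousOn measurableSet_ball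
  have hcont' : ContinuousOn f' (ball (0 : EuclideanSpace ℝ (Fin m)) (2 * δ)) := hcont.congr hff'
  have hvisc' : ViscSupersol v f' (ball (0 : EuclideanSpace ℝ (Fin m)) (2 * δ)) := by
    intro z₀ hz ψ ρ h1 h2 h3 h4 h5
    rw [hff' z₀ hz]
    exact hvisc z₀ hz ψ ρ h1 h2 h3 h4 h5
  have hAb : ∀ᵐ z ∂(volume.restrict A), z ∈ ball (0 : EuclideanSpace ℝ (Fin m)) δ :=
    ae_mono (Measure.restrict_mono inter_subset_left le_rfl) (ae_restrict_mem measurableSet_ball)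
  have heq : ∫ z in A, max (f z) 0 ^ m = ∫ z in A, max (f' z) 0 ^ m := by
    refine integral_congr_ae ?_
    filter_upwards [hAb] with z hz
    rw [hff' z (hδ2 hz)]
  have hint : IntegrableOn (fun z => max (f' z) 0 ^ m) A := by
    have h1 : ContinuousOn (fun z => max (f' z) 0 ^ m)
        (closedBall (0 : EuclideanSpace ℝ (Fin m)) δ) := by
      have h0 := hcont'.mono (closedBall_subset_ball (ε₁ := δ) (by linarith))
      exact (h0.sup continuousOn_const).pow m
    exact (h1.integrableOn_compact (isCompact_closedBall _ _)).mono_set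
      (inter_subset_left.trans ball_subset_closedBall)
  rw [heq]
  set J := ∫ z in A, max (f' z) 0 ^ m with hJ
  have hJnn : 0 ≤ J := integral_nonneg fun z => by positivity
  set ω := (volume (ball (0 : EuclideanSpace ℝ (Fin m)) 1)).toReal with hω
  have hAfin : volume A ≠ ⊤ := ((measure_mono inter_subset_left).trans_lt measure_ball_lt_top).ne
  have hineq : ∀ ε > (0:ℝ), (M / (4 * δ)) ^ m * ω ≤ 32 ^ m * (J + (2 * ε) ^ m * (volume A).toReal) := by
    intro ε hε
    have h1 := abp_core hm δ v f' hδ hlsc hbdd hnn hcont' hvisc' hmeas M hM hMpos ε hε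
    have hle : ∀ z, (16 * (max (f' z) 0 + 2 * ε)) ^ m ≤ 32 ^ m * (max (f' z) 0 ^ m + (2 * ε) ^ m) := by
      intro z
      have h2 := add_pow_le (le_max_right (f' z) 0) (by positivity : 0 ≤ 2 * ε) m
      have h3 : (2:ℝ) ^ (m - 1) ≤ 2 ^ m := pow_le_pow_right₀ (by norm_num) (by omega)
      have h4 : (2:ℝ) ^ (m - 1) * (max (f' z) 0 ^ m + (2 * ε) ^ m) ≤
        2 ^ m * (max (f' z) 0 ^ m + (2 * ε) ^ m) := by gcongr
      have h5 : (32:ℝ) ^ m = 16 ^ m * 2 ^ m := by rw [← mul_pow]; norm_num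
      rw [mul_pow, h5, mul_assoc]
      gcongr
      exact h2.trans h4
    have hint2 : IntegrableOn (fun z => 32 ^ m * (max (f' z) 0 ^ m + (2 * ε) ^ m)) A :=
      (hint.add (integrableOn_const hAfin)).const_mul _
    have h2 : volume (ball (0 : EuclideanSpace ℝ (Fin m)) (M / (4 * δ))) ≤
        ENNReal.ofReal (∫ z in A, 32 ^ m * (max (f' z) 0 ^ m + (2 * ε) ^ m)) := by
      rw [ofReal_integral_eq_lintegral_ofReal hint2 (ae_of_all _ fun z => by positivity)]
      exact h1.trans (lintegral_mono fun z => ENNReal.ofReal_le_ofReal (hle z))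
    have h3 : ∫ z in A, 32 ^ m * (max (f' z) 0 ^ m + (2 * ε) ^ m)
        = 32 ^ m * (J + (2 * ε) ^ m * (volume A).toReal) := by
      rw [integral_const_mul, integral_add hint (integrableOn_const hAfin), setIntegral_const]
      simp [Measure.real, mul_comm]
      rfl
    rw [h3, Measure.addHaar_ball_of_pos _ _ (by positivity), finrank_euclideanSpace_fin] at h2
    have h4 := ENNReal.toReal_mono ENNReal.ofReal_ne_top h2
    rw [ENNReal.toReal_mul, ENNReal.toReal_ofReal (by positivity),
      ENNReal.toReal_ofReal (by positivity)] at h4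
    exact h4
  have hlim : Tendsto (fun ε : ℝ => 32 ^ m * (J + (2 * ε) ^ m * (volume A).toReal)) (𝓝[>] 0)
      (𝓝 (32 ^ m * (J + (2 * 0) ^ m * (volume A).toReal))) := by
    apply Tendsto.mono_left _ nhdsWithin_le_nhds
    apply Continuous.tendsto
    fun_prop
  have h := ge_of_tendsto hlim (eventually_mem_nhdsWithin.mono hineq)
  simpa [hm.ne'] using h

/-- **Alexandrov–Bakelman–Pucci estimate** for lower semicontinuous viscosity
supersolutions: `sup_{B_δ} max(−inf v, 0) ≤ C δ (∫_{B_δ ∩ {v = Γ_v}} max(f,0)^m dV)^{1/m}`,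
with a constant `C` depending only on the dimension `m`. -/
theorem abp_estimate (m : ℕ) (hm : 0 < m) :
    ∃ C > (0:ℝ), ∀ δ > (0:ℝ), ∀ v f : EuclideanSpace ℝ (Fin m) → ℝ,
      LowerSemicontinuousOn v (closedBall (0 : EuclideanSpace ℝ (Fin m)) (2 * δ)) →
      BddBelow (v '' ball (0 : EuclideanSpace ℝ (Fin m)) δ) →
      (∀ z ∈ ball (0 : EuclideanSpace ℝ (Fin m)) (2 * δ) \
          ball (0 : EuclideanSpace ℝ (Fin m)) δ, 0 ≤ v z) →
      ContinuousOn f (ball (0 : EuclideanSpace ℝ (Fin m)) (2 * δ)) →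
      ViscSupersol v f (ball (0 : EuclideanSpace ℝ (Fin m)) (2 * δ)) →
      max (-sInf (v '' ball (0 : EuclideanSpace ℝ (Fin m)) δ)) 0 ≤
        C * δ * (∫ z in ball (0 : EuclideanSpace ℝ (Fin m)) δ ∩
            {z | v z = convEnv δ v z}, max (f z) 0 ^ m) ^ ((1:ℝ) / m) := by
  set ω := (volume (ball (0 : EuclideanSpace ℝ (Fin m)) 1)).toReal with hω
  have hωpos : 0 < ω := ENNReal.toReal_pos (measure_ball_pos _ _ one_pos).ne' measure_ball_lt_top.ne
  refine ⟨128 * (ω⁻¹) ^ ((1:ℝ) / m), by positivity, ?_⟩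
  intro δ hδ v f hlsc hbdd hnn hcont hvisc
  set J := ∫ z in ball (0 : EuclideanSpace ℝ (Fin m)) δ ∩
            {z | v z = convEnv δ v z}, max (f z) 0 ^ m with hJ
  have hJnn : 0 ≤ J := integral_nonneg fun z => by positivity
  refine max_le ?_ (by positivity)
  rcases le_or_gt (-sInf (v '' ball (0 : EuclideanSpace ℝ (Fin m)) δ)) 0 with hneg | hpos
  · exact hneg.trans (by positivity)
  have h := abp_core2 hm δ v f hδ hlsc hbdd hnn hcont hvisc _ rfl hpos
  set M := -sInf (v '' ball (0 : EuclideanSpace ℝ (Fin m)) δ) with hM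
  rw [← hω, ← hJ] at h
  have hroot : ∀ x : ℝ, 0 ≤ x → (x ^ ((1:ℝ) / m)) ^ m = x := fun x hx => by
    rw [one_div]
    exact Real.rpow_inv_natCast_pow hx hm.ne'
  refine (pow_le_pow_iff_left₀ hpos.le (by positivity) hm.ne').1 ?_
  rw [mul_pow, mul_pow, mul_pow, hroot _ hJnn, hroot _ (by positivity)]
  rw [div_pow, div_mul_eq_mul_div, div_le_iff₀ (by positivity)] at h
  have e : (128:ℝ) ^ m * ω⁻¹ * δ ^ m * J = (32 ^ m * J * (4 * δ) ^ m) / ω := by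
    have : (128:ℝ) ^ m = 32 ^ m * 4 ^ m := by rw [← mul_pow]; norm_num
    rw [this, mul_pow]
    field_simp
  rw [e, le_div_iff₀ hωpos]
  exact h
end
end

section
/- If v is a lower semicontinuous viscosity supersolution of Δv = f on a ball with f continuous, v ≥ 0 on the outer collar, inf_{B_δ} v ≤ −δ³ < 0, then the contact set {v = Γ_v} ∩ B_δ, where Γ_v is the convex envelope, has positive Lebesgue measure. -/
open MeasureTheory Metric Set Real Filter Topology

noncomputable section

theorem lapR_quad {m : ℕ} (a α b s : ℝ) (p e z y : EuclideanSpace ℝ (Fin m)) :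
    lapR (fun x => a + inner ℝ p (x - z) + α * (inner ℝ e (x - z) + s) ^ 2
      - b * ‖x - z‖ ^ 2) y = 2 * α * ‖e‖ ^ 2 - 2 * b * m := by
  have h1 : ∀ x, HasFDerivAt (fun x => a + inner ℝ p (x - z) + α * (inner ℝ e (x - z) + s) ^ 2
      - b * ‖x - z‖ ^ 2) (innerSL ℝ p + (2 * α * (inner ℝ e (x - z) + s)) • innerSL ℝ e
        - (2 * b) • innerSL ℝ (x - z)) x := by
    intro x
    have hid : HasFDerivAt (fun x : EuclideanSpace ℝ (Fin m) => x - z)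
      (ContinuousLinearMap.id ℝ _) x := (hasFDerivAt_id x).sub_const z
    have hp : ∀ q : EuclideanSpace ℝ (Fin m), HasFDerivAt
        (fun x => inner ℝ q (x - z)) (innerSL ℝ q) x := fun q => by
      exact ((innerSL ℝ q).hasFDerivAt (x := x - z)).comp x hid
    have h := (((hp p).const_add a).add ((((hp e).add_const s).pow 2).const_mul α)).sub
      ((hid.norm_sq).const_mul b)
    refine h.congr_fderiv ?_
    ext w
    simp
    ring
  let J : EuclideanSpace ℝ (Fin m) →L[ℝ] (EuclideanSpace ℝ (Fin m) →L[ℝ] ℝ) :=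
    LinearMap.toContinuousLinearMap
      { toFun := fun x => innerSL ℝ x
        map_add' := fun x y => map_add _ x y
        map_smul' := fun c x => by ext w; simp }
  have hJ : ∀ w w', J w w' = inner ℝ w w' := fun w w' => rfl
  have h2 : ∀ x, HasFDerivAt (fun x => innerSL ℝ p + (2 * α * (inner ℝ e (x - z) + s)) • innerSL ℝ e
        - (2 * b) • innerSL ℝ (x - z)) ((((2 * α) • innerSL ℝ e).smulRight (innerSL ℝ e))
          - (2 * b) • J) x := by
    intro x
    have hid : HasFDerivAt (fun x : EuclideanSpace ℝ (Fin m) => x - z)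
      (ContinuousLinearMap.id ℝ _) x := (hasFDerivAt_id x).sub_const z
    have hp : ∀ q : EuclideanSpace ℝ (Fin m), HasFDerivAt
        (fun x => inner ℝ q (x - z)) (innerSL ℝ q) x := fun q => by
      exact ((innerSL ℝ q).hasFDerivAt (x := x - z)).comp x hid
    have hI : HasFDerivAt (fun x : EuclideanSpace ℝ (Fin m) => innerSL ℝ (x - z))
        J x := by
      exact (J.hasFDerivAt (x := x - z)).comp x hid
    have h := ((((((hp e).add_const s).const_mul (2*α)).smul_const (innerSL ℝ e))).const_add
      (innerSL ℝ p)).sub (hI.const_smul (2*b))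
    exact h
  have h3 : fderiv ℝ (fun x => a + inner ℝ p (x - z) + α * (inner ℝ e (x - z) + s) ^ 2
      - b * ‖x - z‖ ^ 2) = _ := funext fun x => (h1 x).fderiv
  unfold lapR
  simp_rw [iteratedFDeriv_two_apply, h3, (h2 y).fderiv]
  simp [hJ, EuclideanSpace.norm_sq_eq, Finset.sum_sub_distrib, Finset.mul_sum,
    EuclideanSpace.inner_single_right]
  rw [mul_comm (m : ℝ)]
  congr 1
  exact Finset.sum_congr rfl fun i _ => by ring

theorem slope_bound {m : ℕ} (hm : 0 < m) {δ : ℝ} (hδ : 0 < δ)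
    {v f : EuclideanSpace ℝ (Fin m) → ℝ}
    (hlsc : LowerSemicontinuousOn v (closedBall (0 : EuclideanSpace ℝ (Fin m)) (2 * δ)))
    (hsup : ViscSupersol v f (ball (0 : EuclideanSpace ℝ (Fin m)) (2 * δ)))
    {F : ℝ} (hF0 : 0 < F)
    (hF : ∀ x ∈ closedBall (0 : EuclideanSpace ℝ (Fin m)) (3 / 2 * δ), f x ≤ F)
    {z0 z1 p0 p1 : EuclideanSpace ℝ (Fin m)}
    (hz0 : z0 ∈ ball (0 : EuclideanSpace ℝ (Fin m)) δ)
    (hz1 : z1 ∈ ball (0 : EuclideanSpace ℝ (Fin m)) δ)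
    (h0 : ∀ x ∈ ball (0 : EuclideanSpace ℝ (Fin m)) (2 * δ), v z0 + inner ℝ p0 (x - z0) ≤ v x)
    (h1 : ∀ x ∈ ball (0 : EuclideanSpace ℝ (Fin m)) (2 * δ), v z1 + inner ℝ p1 (x - z1) ≤ v x)
    {t : ℝ} (ht : 0 < t) (hzt : ‖z1 - z0‖ ≤ t) (htδ : 32 * m * t ≤ δ) :
    ‖p1 - p0‖ ≤ 16 * F * t := by
  by_cases hq : p1 - p0 = 0
  · rw [hq, norm_zero]; positivity
  have hqpos : 0 < ‖p1 - p0‖ := norm_pos_iff.2 hq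
  obtain ⟨q, hqdef⟩ : ∃ q, q = ‖p1 - p0‖ := ⟨_, rfl⟩
  obtain ⟨e, he⟩ : ∃ e, e = q⁻¹ • (p1 - p0) := ⟨_, rfl⟩
  rw [← hqdef] at hqpos ⊢
  have hpe : p1 - p0 = q • e := by rw [he, smul_smul, mul_inv_cancel₀ hqpos.ne', one_smul]
  have hen : ‖e‖ = 1 := by
    rw [he, norm_smul, ← hqdef, norm_inv, Real.norm_of_nonneg hqpos.le,
      inv_mul_cancel₀ hqpos.ne']
  have hmR : (1 : ℝ) ≤ m := by exact_mod_cast hm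
  obtain ⟨α, hα⟩ : ∃ α, α = q / (16 * t) := ⟨_, rfl⟩
  have hαpos : 0 < α := by rw [hα]; positivity
  have hqα : q = 16 * t * α := by rw [hα]; field_simp
  obtain ⟨b, hb⟩ : ∃ b, b = α / (2 * m) := ⟨_, rfl⟩
  have hbm : b * (2 * m) = α := by rw [hb]; field_simp
  have hbpos : 0 < b := by rw [hb]; positivity
  have hz0' : ‖z0‖ < δ := by simpa using hz0
  have hz1' : ‖z1‖ < δ := by simpa using hz1
  have hz1'' : z1 ∈ ball (0 : EuclideanSpace ℝ (Fin m)) (2 * δ) := by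
    rw [mem_ball_zero_iff]; linarith
  have hin : ∀ x ∈ closedBall z0 (16 * m * t), ‖x‖ < 3 / 2 * δ := by
    intro x hx
    rw [mem_closedBall, dist_eq_norm] at hx
    have := norm_le_norm_add_norm_sub' x z0
    linarith
  obtain ⟨Q, hQ⟩ : ∃ Q : EuclideanSpace ℝ (Fin m) → ℝ, Q = fun x => v z0 + inner ℝ p0 (x - z0)
      + α * (inner ℝ e (x - z0) + 2 * t) ^ 2 - b * ‖x - z0‖ ^ 2 := ⟨_, rfl⟩
  have hQx : ∀ x, Q x = v z0 + inner ℝ p0 (x - z0)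
      + α * (inner ℝ e (x - z0) + 2 * t) ^ 2 - b * ‖x - z0‖ ^ 2 := fun x => by rw [hQ]
  have hQc : Continuous Q := by rw [hQ]; fun_prop
  obtain ⟨D, hD⟩ : ∃ D, D = closedBall z0 (16 * m * t) ∩
      {x | |inner ℝ e (x - z0)| ≤ 2 * t} := ⟨_, rfl⟩
  have hDc : IsCompact D := by
    rw [hD]
    refine (isCompact_closedBall _ _).inter_right (isClosed_le ?_ continuous_const)
    fun_prop
  have hz0D : z0 ∈ D := by
    rw [hD]
    refine ⟨mem_closedBall_self (by positivity), ?_⟩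
    simp [ht.le]
  have hDsub : ∀ x ∈ D, ‖x‖ < 3 / 2 * δ := fun x hx => hin x (by rw [hD] at hx; exact hx.1)
  have hl : LowerSemicontinuousOn (fun x => v x + -Q x) D := by
    refine LowerSemicontinuousOn.add (hlsc.mono ?_) (hQc.neg.lowerSemicontinuous.lowerSemicontinuousOn D)
    intro x hx
    rw [mem_closedBall_zero_iff]
    linarith [hDsub x hx]
  obtain ⟨y, hyD, hy⟩ := hl.exists_isMinOn ⟨z0, hz0D⟩ hDc
  rw [isMinOn_iff] at hy
  have hyz := hy z0 hz0D
  have hQz0 : Q z0 = v z0 + α * (2 * t) ^ 2 := by simp [hQx]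
  have hneg : v y - Q y < 0 := by
    have : 0 < α * (2 * t) ^ 2 := by positivity
    linarith
  have hyn := hDsub y hyD
  have hyB : y ∈ ball (0 : EuclideanSpace ℝ (Fin m)) (2 * δ) := by
    rw [mem_ball_zero_iff]; linarith
  have hy0 := h0 y hyB
  have hyD' := hyD
  rw [hD] at hyD'
  obtain ⟨hy1, hy2⟩ := hyD'
  rw [mem_closedBall, dist_eq_norm] at hy1
  have hy2 : |inner ℝ e (y - z0)| ≤ 2 * t := hy2
  have hQy := hQx y
  have hyR : ‖y - z0‖ < 16 * m * t := by
    refine lt_of_le_of_ne hy1 fun h => ?_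
    have h4 : (inner ℝ e (y - z0) + 2 * t) ^ 2 ≤ (4 * t) ^ 2 := by
      have := abs_le.1 hy2
      exact pow_le_pow_left₀ (by linarith) (by linarith) 2
    have h5 := mul_le_mul_of_nonneg_left h4 hαpos.le
    have h6 : b * ‖y - z0‖ ^ 2 = α * (128 * m * t ^ 2) := by
      rw [h, ← hbm]; ring
    have h7 : α * (4 * t) ^ 2 ≤ α * (128 * m * t ^ 2) := by
      refine mul_le_mul_of_nonneg_left ?_ hαpos.le
      nlinarith [sq_nonneg t]
    linarith
  have hyS : |inner ℝ e (y - z0)| < 2 * t := by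
    refine lt_of_le_of_ne hy2 fun h => ?_
    have hb0 : 0 ≤ b * ‖y - z0‖ ^ 2 := by positivity
    rcases (abs_eq (by positivity)).1 h with h | h
    · have ha := h1 y hyB
      have hc := h0 z1 hz1''
      have hd : inner ℝ p1 (y - z1) + inner ℝ p0 (z1 - z0) - inner ℝ p0 (y - z0)
          = q * (inner ℝ e (y - z0) - inner ℝ e (z1 - z0)) := by
        have hp1 : p1 = p0 + q • e := by rw [← hpe]; abel
        rw [hp1]
        simp only [inner_add_left, inner_sub_right, real_inner_smul_left]
        ring
      have hcs : inner ℝ e (z1 - z0) ≤ t := by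
        have := real_inner_le_norm e (z1 - z0)
        rw [hen, one_mul] at this
        linarith
      have hg : q * t ≤ q * (inner ℝ e (y - z0) - inner ℝ e (z1 - z0)) :=
        mul_le_mul_of_nonneg_left (by rw [h]; linarith) hqpos.le
      have hk : α * (inner ℝ e (y - z0) + 2 * t) ^ 2 = q * t := by rw [h, hqα]; ring
      linarith
    · have hk : α * (inner ℝ e (y - z0) + 2 * t) ^ 2 = 0 := by rw [h]; ring
      linarith
  have hU : IsOpen (ball z0 (16 * m * t) ∩ {x | |inner ℝ e (x - z0)| < 2 * t}) := by
    refine isOpen_ball.inter (isOpen_lt ?_ continuous_const)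
    fun_prop
  obtain ⟨ρ, hρ, hρU⟩ := Metric.isOpen_iff.1 hU y ⟨by rwa [mem_ball, dist_eq_norm], hyS⟩
  have hUD : ball y ρ ⊆ D := fun x hx => by
    rw [hD]
    have hlt : |inner ℝ e (x - z0)| < 2 * t := (hρU hx).2
    exact ⟨ball_subset_closedBall (hρU hx).1, hlt.le⟩
  have key := hsup y hyB (fun x => (v z0 + (v y - Q y)) + inner ℝ p0 (x - z0)
      + α * (inner ℝ e (x - z0) + 2 * t) ^ 2 - b * ‖x - z0‖ ^ 2) ρ hρ
      (fun x hx => by rw [mem_ball_zero_iff]; linarith [hDsub x (hUD hx)])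
      (ContDiff.contDiffOn (by
        have hs : ContDiff ℝ 2 (fun x : EuclideanSpace ℝ (Fin m) => x - z0) :=
          contDiff_id.sub contDiff_const
        exact ((contDiff_const.add (contDiff_const.inner ℝ hs)).add
          (contDiff_const.mul (((contDiff_const.inner ℝ hs).add contDiff_const).pow 2))).sub
          (contDiff_const.mul (hs.norm_sq ℝ))))
      (fun x hx => by
        have := hy x (hUD hx)
        have := hQx x
        linarith)
      (by linarith)
  rw [lapR_quad, hen] at key
  have hfy := hF y (by rw [mem_closedBall_zero_iff]; exact hyn.le)
  have hαF : α ≤ F := by linarith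
  rw [hqα]
  nlinarith

theorem exists_slope {m : ℕ} {δ : ℝ} (hδ : 0 < δ)
    {v : EuclideanSpace ℝ (Fin m) → ℝ}
    (hlsc : LowerSemicontinuousOn v (closedBall (0 : EuclideanSpace ℝ (Fin m)) (2 * δ)))
    (hcollar : ∀ z ∈ ball (0 : EuclideanSpace ℝ (Fin m)) (2 * δ) \
        ball (0 : EuclideanSpace ℝ (Fin m)) δ, 0 ≤ v z)
    (hinf : sInf (v '' ball (0 : EuclideanSpace ℝ (Fin m)) δ) ≤ -δ ^ 3)
    (p : EuclideanSpace ℝ (Fin m)) (hp : ‖p‖ < δ ^ 2 / 6) :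
    ∃ z ∈ ball (0 : EuclideanSpace ℝ (Fin m)) δ, v z = convEnv δ v z ∧
      ∀ x ∈ ball (0 : EuclideanSpace ℝ (Fin m)) (2 * δ), v z + inner ℝ p (x - z) ≤ v x := by
  have hδ3 : 0 < δ ^ 3 := by positivity
  obtain ⟨_, ⟨x0, hx0, rfl⟩, hx0v⟩ := exists_lt_of_csInf_lt
    (s := v '' ball (0 : EuclideanSpace ℝ (Fin m)) δ)
    ((nonempty_ball.2 hδ).image v) (show _ < -δ ^ 3 / 2 by linarith)
  rw [mem_ball_zero_iff] at hx0
  have hpδ : ‖p‖ * δ * 6 < δ ^ 3 := by nlinarith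
  have hip : ∀ x : EuclideanSpace ℝ (Fin m), |inner ℝ p x| ≤ ‖p‖ * ‖x‖ :=
    fun x => abs_real_inner_le_norm p x
  have hl : LowerSemicontinuousOn (fun x => v x + -inner ℝ p x)
      (closedBall (0 : EuclideanSpace ℝ (Fin m)) δ) := by
    refine LowerSemicontinuousOn.add (hlsc.mono (closedBall_subset_closedBall (by linarith))) ?_
    refine Continuous.lowerSemicontinuous ?_ |>.lowerSemicontinuousOn _
    fun_prop
  obtain ⟨z, hz, hzm⟩ := hl.exists_isMinOn ⟨0, mem_closedBall_self hδ.le⟩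
    (isCompact_closedBall _ _)
  rw [isMinOn_iff] at hzm
  rw [mem_closedBall_zero_iff] at hz
  have hz0 := hzm x0 (by rw [mem_closedBall_zero_iff]; exact hx0.le)
  have hpx0 : |inner ℝ p x0| ≤ ‖p‖ * δ :=
    (hip x0).trans (mul_le_mul_of_nonneg_left hx0.le (norm_nonneg _))
  have hpz : |inner ℝ p z| ≤ ‖p‖ * δ :=
    (hip z).trans (mul_le_mul_of_nonneg_left hz (norm_nonneg _))
  rw [abs_le] at hpx0 hpz
  have hzδ : z ∈ ball (0 : EuclideanSpace ℝ (Fin m)) δ := by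
    by_contra h
    have := hcollar z ⟨by rw [mem_ball_zero_iff]; linarith, h⟩
    linarith
  have hlin : ∀ x ∈ ball (0 : EuclideanSpace ℝ (Fin m)) δ, v z + inner ℝ p (x - z) ≤ v x := by
    intro x hx
    have := hzm x (ball_subset_closedBall hx)
    rw [inner_sub_right]
    linarith
  have hlout : ∀ x ∈ ball (0 : EuclideanSpace ℝ (Fin m)) (2 * δ) \
        ball (0 : EuclideanSpace ℝ (Fin m)) δ, v z + inner ℝ p (x - z) ≤ 0 := by
    intro x hx
    have hx2 : ‖x‖ ≤ 2 * δ := by have := hx.1; rw [mem_ball_zero_iff] at this; exact this.le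
    have hpx : |inner ℝ p x| ≤ ‖p‖ * (2 * δ) :=
      (hip x).trans (mul_le_mul_of_nonneg_left hx2 (norm_nonneg _))
    rw [abs_le] at hpx
    rw [inner_sub_right]
    linarith
  refine ⟨z, hzδ, ?_, ?_⟩
  · symm
    refine IsGreatest.csSup_eq ⟨?_, ?_⟩
    · refine ⟨(innerSL ℝ p).toLinearMap.toAffineMap +
        AffineMap.const ℝ _ (v z - inner ℝ p z), ?_, ?_, ?_⟩
      · intro x hx
        have := hlin x hx
        rw [inner_sub_right] at this
        simp
        linarith
      · intro x hx
        have := hlout x hx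
        rw [inner_sub_right] at this
        simp
        linarith
      · simp
    · rintro _ ⟨l, hl1, -, rfl⟩
      exact hl1 z hzδ
  · intro x hx
    by_cases hxb : x ∈ ball (0 : EuclideanSpace ℝ (Fin m)) δ
    · exact hlin x hxb
    · exact (hlout x ⟨hx, hxb⟩).trans (hcollar x ⟨hx, hxb⟩)

/-- If `v` is a lower semicontinuous viscosity supersolution of `Δv = f` with `f`
continuous, `v ≥ 0` on the outer collar and `inf_{B_δ} v ≤ −δ³ < 0`, then the contact set
`{v = Γ_v} ∩ B_δ` with the convex envelope `Γ_v` has positive Lebesgue measure. -/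
theorem contact_set_pos_measure (m : ℕ) (hm : 0 < m) (δ : ℝ) (hδ : 0 < δ)
    (v f : EuclideanSpace ℝ (Fin m) → ℝ)
    (hlsc : LowerSemicontinuousOn v (closedBall (0 : EuclideanSpace ℝ (Fin m)) (2 * δ)))
    (hbdd : BddBelow (v '' ball (0 : EuclideanSpace ℝ (Fin m)) δ))
    (hcollar : ∀ z ∈ ball (0 : EuclideanSpace ℝ (Fin m)) (2 * δ) \
        ball (0 : EuclideanSpace ℝ (Fin m)) δ, 0 ≤ v z)
    (hf : ContinuousOn f (ball (0 : EuclideanSpace ℝ (Fin m)) (2 * δ)))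
    (hsup : ViscSupersol v f (ball (0 : EuclideanSpace ℝ (Fin m)) (2 * δ)))
    (hinf : sInf (v '' ball (0 : EuclideanSpace ℝ (Fin m)) δ) ≤ -δ ^ 3) :
    0 < volume (ball (0 : EuclideanSpace ℝ (Fin m)) δ ∩
      {z | v z = convEnv δ v z}) := by
  by_contra hpos
  have hnull : volume (ball (0 : EuclideanSpace ℝ (Fin m)) δ ∩
      {z | v z = convEnv δ v z}) = 0 := by simpa using hpos
  have hmR : (1 : ℝ) ≤ m := by exact_mod_cast hm
  obtain ⟨F0, hF0⟩ := (isCompact_closedBall (0 : EuclideanSpace ℝ (Fin m)) (3 / 2 * δ)).bddAbove_image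
    (hf.mono (closedBall_subset_ball (by linarith)))
  obtain ⟨F, hFdef⟩ : ∃ F, F = max F0 1 := ⟨_, rfl⟩
  have hFpos : 0 < F := by rw [hFdef]; positivity
  have hF : ∀ x ∈ closedBall (0 : EuclideanSpace ℝ (Fin m)) (3 / 2 * δ), f x ≤ F := fun x hx =>
    (hF0 ⟨x, hx, rfl⟩).trans (by rw [hFdef]; exact le_max_left _ _)
  have hr : 0 < δ ^ 2 / 6 := by positivity
  obtain ⟨B, hB⟩ : ∃ B, B = ball (0 : EuclideanSpace ℝ (Fin m)) (δ ^ 2 / 6) := ⟨_, rfl⟩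
  have hBn : ∀ p ∈ B, ‖p‖ < δ ^ 2 / 6 := fun p hp => by rw [hB] at hp; simpa using hp
  choose! g hg1 hg2 hg3 using fun p hp => exists_slope hδ hlsc hcollar hinf p (hBn p hp)
  obtain ⟨τ, hτ⟩ : ∃ τ, τ = δ / (32 * m) := ⟨_, rfl⟩
  have hτpos : 0 < τ := by rw [hτ]; positivity
  have hτδ : 32 * m * τ = δ := by rw [hτ]; field_simp
  obtain ⟨L, hL⟩ : ∃ L, L = max (16 * F) (δ ^ 2 / τ) := ⟨_, rfl⟩
  have hLpos : 0 < L := by rw [hL]; positivity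
  have hLF : 16 * F ≤ L := by rw [hL]; exact le_max_left _ _
  have hLτ : δ ^ 2 ≤ L * τ := by
    rw [← div_le_iff₀ hτpos, hL]; exact le_max_right _ _
  have hlip : ∀ p0 ∈ B, ∀ p1 ∈ B, ‖p1 - p0‖ ≤ L * ‖g p1 - g p0‖ := by
    intro p0 hp0 p1 hp1
    rcases le_or_gt ‖g p1 - g p0‖ τ with h | h
    · have hs : ∀ t, 0 < t → ‖g p1 - g p0‖ ≤ t → t ≤ τ → ‖p1 - p0‖ ≤ 16 * F * t :=
        fun t ht h1 h2 => slope_bound hm hδ hlsc hsup hFpos hF (hg1 p0 hp0) (hg1 p1 hp1)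
          (hg3 p0 hp0) (hg3 p1 hp1) ht h1 (by rw [← hτδ]; gcongr)
      rcases (norm_nonneg (g p1 - g p0)).eq_or_lt with h0 | h0
      · rw [← h0, mul_zero]
        by_contra! hc
        have h1 : 0 < ‖p1 - p0‖ / (32 * F) := by positivity
        have h2 := hs (min τ (‖p1 - p0‖ / (32 * F))) (lt_min hτpos h1)
          (by rw [← h0]; exact (lt_min hτpos h1).le) (min_le_left _ _)
        have h3 : 16 * F * min τ (‖p1 - p0‖ / (32 * F)) ≤ 16 * F * (‖p1 - p0‖ / (32 * F)) := by
          gcongr; exact min_le_right _ _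
        have h4 : 16 * F * (‖p1 - p0‖ / (32 * F)) = ‖p1 - p0‖ / 2 := by field_simp; norm_num
        linarith
      · exact (hs _ h0 le_rfl h).trans (by gcongr)
    · have h1 : ‖p1 - p0‖ ≤ δ ^ 2 := by
        have := norm_sub_le p1 p0
        have := hBn p0 hp0
        have := hBn p1 hp1
        linarith
      exact h1.trans (hLτ.trans (by gcongr))
  have hinj : InjOn g B := by
    intro p1 hp1 p0 hp0 h
    have := hlip p0 hp0 p1 hp1
    rw [h, sub_self, norm_zero, mul_zero] at this
    exact sub_eq_zero.1 (norm_le_zero_iff.1 this)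
  have hinv : ∀ p ∈ B, Function.invFunOn g B (g p) = p := fun p hp => hinj.leftInvOn_invFunOn hp
  have hlo : LipschitzOnWith L.toNNReal (Function.invFunOn g B) (g '' B) := by
    refine LipschitzOnWith.of_dist_le_mul ?_
    rintro _ ⟨p1, hp1, rfl⟩ _ ⟨p0, hp0, rfl⟩
    rw [hinv p1 hp1, hinv p0 hp0, dist_eq_norm, dist_eq_norm, Real.coe_toNNReal _ hLpos.le]
    exact hlip p0 hp0 p1 hp1
  have himg : Function.invFunOn g B '' (g '' B) = B := by
    ext p
    constructor
    · rintro ⟨_, ⟨p1, hp1, rfl⟩, rfl⟩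
      rwa [hinv p1 hp1]
    · exact fun hp => ⟨_, ⟨p, hp, rfl⟩, hinv p hp⟩
  have hsub : g '' B ⊆ ball (0 : EuclideanSpace ℝ (Fin m)) δ ∩ {z | v z = convEnv δ v z} := by
    rintro _ ⟨p, hp, rfl⟩
    exact ⟨hg1 p hp, hg2 p hp⟩
  have hH : Measure.IsAddHaarMeasure (G := EuclideanSpace ℝ (Fin m))
      (Measure.hausdorffMeasure (m : ℝ)) := by
    simpa using MeasureTheory.isAddHaarMeasure_hausdorffMeasure (E := EuclideanSpace ℝ (Fin m))
  have hgn : (Measure.hausdorffMeasure (m : ℝ) : Measure (EuclideanSpace ℝ (Fin m))) (g '' B) = 0 :=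
    Measure.absolutelyContinuous_isAddHaarMeasure _ volume (measure_mono_null hsub hnull)
  have hle := hlo.hausdorffMeasure_image_le (d := (m : ℝ)) (by positivity)
  rw [himg, hgn, mul_zero, hB] at hle
  exact (isOpen_ball.measure_pos (Measure.hausdorffMeasure (m : ℝ)) (nonempty_ball.2 hr)).ne'
    (le_antisymm hle bot_le)
end
end
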